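/- arXiv:2404.07536 — 3 statements merged into one kernel-verified Lean document; each statement's English description precedes it below -/
import Mathlib

section
/- Let n, o be positive integers, P ∈ ℝ^{n×n} symmetric positive semidefinite, H ∈ ℝ^{o×n}, and R ∈ ℝ^{o×o} symmetric positive definite. Then the matrix H P Hᵀ + R is invertible and the optimal Kalman gain G* = P Hᵀ (H P Hᵀ + R)⁻¹ is the unique minimizer over G ∈ ℝ^{n×o} of the trace of the Joseph-form covariance update, i.e. trace(P⁺(G*)) ≤ trace(P⁺(G)) for all G ∈ ℝ^{n×o}, with equality only if G = G*. -/
open Matrix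

/-! Write `S = H P Hᴴ + R`. The Kalman gain `K` solves the normal equation `K S = P Hᴴ`, so
completing the square turns the Joseph form into `P⁺(G) = P⁺(K) + (G - K) S (G - K)ᴴ`. Since `S` is
positive definite, the last term is positive semidefinite and its trace vanishes only for `G = K`.
-/

section TraceCongruence

variable {m n 𝕜 : Type*} [Fintype m] [Fintype n]

theorem trace_mul_mul_conjTranspose_eq_sum [NonUnitalSemiring 𝕜] [StarRing 𝕜]
    (D : Matrix m n 𝕜) (S : Matrix n n 𝕜) :
    (D * S * Dᴴ).trace = ∑ i, D i ⬝ᵥ S *ᵥ star (D i) :=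
  Finset.sum_congr rfl fun _ _ => (dotProduct_mulVec _ _ _).symm

theorem trace_mul_mul_conjTranspose_eq_zero_iff [Ring 𝕜] [PartialOrder 𝕜] [StarRing 𝕜]
    [AddLeftMono 𝕜] {S : Matrix n n 𝕜} (hS : S.PosDef) {D : Matrix m n 𝕜} :
    (D * S * Dᴴ).trace = 0 ↔ D = 0 := by
  have row_nonneg (i : m) : 0 ≤ D i ⬝ᵥ S *ᵥ star (D i) := by
    simpa only [star_star] using hS.posSemidef.dotProduct_mulVec_nonneg (star (D i))
  have row_pos {i : m} (hi : D i ≠ 0) : 0 < D i ⬝ᵥ S *ᵥ star (D i) := by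
    simpa only [star_star] using hS.dotProduct_mulVec_pos (star_ne_zero.2 hi)
  refine ⟨fun h => ?_, fun h => by simp [h]⟩
  rw [trace_mul_mul_conjTranspose_eq_sum,
    Finset.sum_eq_zero_iff_of_nonneg fun i _ => row_nonneg i] at h
  funext i
  by_contra hi
  exact (row_pos hi).ne' (h i (Finset.mem_univ i))

end TraceCongruence

section JosephForm

variable {n o 𝕜 : Type*} [Fintype n]

/-- The innovation covariance `S = H P Hᴴ + R`: the covariance of the predicted observation error,
whose inverse enters the Kalman gain. Over `ℝ`, `ᴴ` is the transpose. -/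
def innovationCov [Ring 𝕜] [StarRing 𝕜] (P : Matrix n n 𝕜) (H : Matrix o n 𝕜)
    (R : Matrix o o 𝕜) : Matrix o o 𝕜 :=
  H * P * Hᴴ + R

theorem posDef_innovationCov [Finite o] [Ring 𝕜] [PartialOrder 𝕜] [StarRing 𝕜]
    [AddLeftMono 𝕜] {P : Matrix n n 𝕜} (hP : P.PosSemidef) (H : Matrix o n 𝕜) {R : Matrix o o 𝕜}
    (hR : R.PosDef) : (innovationCov P H R).PosDef :=
  PosDef.posSemidef_add (hP.mul_mul_conjTranspose_same H) hR

variable [Fintype o]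

/-- The Joseph form `P⁺(G)` of the posterior covariance: the error covariance after correcting
with an arbitrary, not necessarily optimal, gain `G`. -/
def josephUpdate [DecidableEq n] [Ring 𝕜] [StarRing 𝕜] (P : Matrix n n 𝕜) (H : Matrix o n 𝕜)
    (R : Matrix o o 𝕜) (G : Matrix n o 𝕜) : Matrix n n 𝕜 :=
  (1 - G * H) * P * (1 - G * H)ᴴ + G * R * Gᴴ

/-- The Kalman gain `P Hᴴ S⁻¹`, where `S` is the innovation covariance. It is meaningful only for
invertible `S`, as `⁻¹` is `0` on singular matrices. -/
noncomputable def kalmanGain [DecidableEq o] [CommRing 𝕜] [StarRing 𝕜] (P : Matrix n n 𝕜)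
    (H : Matrix o n 𝕜) (R : Matrix o o 𝕜) : Matrix n o 𝕜 :=
  P * Hᴴ * (innovationCov P H R)⁻¹

section Ring

variable [DecidableEq n] [Ring 𝕜] [StarRing 𝕜]

theorem josephUpdate_eq_sub_sub_add (P : Matrix n n 𝕜) (H : Matrix o n 𝕜) (R : Matrix o o 𝕜)
    (G : Matrix n o 𝕜) :
    josephUpdate P H R G = P - G * (H * P) - P * Hᴴ * Gᴴ + G * innovationCov P H R * Gᴴ := by
  simp only [josephUpdate, innovationCov, conjTranspose_sub, conjTranspose_one,
    conjTranspose_mul, Matrix.sub_mul, Matrix.mul_sub, Matrix.mul_add, Matrix.add_mul,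
    Matrix.one_mul, Matrix.mul_one, Matrix.mul_assoc]
  abel

theorem josephUpdate_eq_add_of_mul_innovationCov {P : Matrix n n 𝕜} {H : Matrix o n 𝕜}
    {R : Matrix o o 𝕜} (hP : P.IsHermitian)
    (hS : (innovationCov P H R).IsHermitian) {K : Matrix n o 𝕜}
    (hK : K * innovationCov P H R = P * Hᴴ) (G : Matrix n o 𝕜) :
    josephUpdate P H R G =
      josephUpdate P H R K + (G - K) * innovationCov P H R * (G - K)ᴴ := by
  have hK_adjoint : H * P = innovationCov P H R * Kᴴ := by
    simpa only [conjTranspose_mul, conjTranspose_conjTranspose, hP.eq, hS.eq] using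
      (congrArg conjTranspose hK).symm
  rw [josephUpdate_eq_sub_sub_add, josephUpdate_eq_sub_sub_add, ← hK, hK_adjoint]
  simp only [conjTranspose_sub, Matrix.sub_mul, Matrix.mul_sub, Matrix.mul_assoc]
  abel

end Ring

theorem kalmanGain_mul_innovationCov [DecidableEq o] [CommRing 𝕜] [StarRing 𝕜]
    {P : Matrix n n 𝕜} {H : Matrix o n 𝕜} {R : Matrix o o 𝕜}
    (hS : IsUnit (innovationCov P H R)) :
    kalmanGain P H R * innovationCov P H R = P * Hᴴ :=
  nonsing_inv_mul_cancel_right _ _ ((isUnit_iff_isUnit_det _).1 hS)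

section Field

variable [DecidableEq n] [DecidableEq o] [Field 𝕜] [PartialOrder 𝕜] [StarRing 𝕜]
  {P : Matrix n n 𝕜} {H : Matrix o n 𝕜} {R : Matrix o o 𝕜}

theorem josephUpdate_eq_kalmanGain_add (hP : P.IsHermitian) (hS : (innovationCov P H R).PosDef)
    (G : Matrix n o 𝕜) :
    josephUpdate P H R G = josephUpdate P H R (kalmanGain P H R) +
      (G - kalmanGain P H R) * innovationCov P H R * (G - kalmanGain P H R)ᴴ :=
  josephUpdate_eq_add_of_mul_innovationCov hP hS.isHermitian
    (kalmanGain_mul_innovationCov hS.isUnit) G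

variable [AddLeftMono 𝕜]

theorem trace_josephUpdate_kalmanGain_le (hP : P.IsHermitian)
    (hS : (innovationCov P H R).PosDef) (G : Matrix n o 𝕜) :
    (josephUpdate P H R (kalmanGain P H R)).trace ≤ (josephUpdate P H R G).trace := by
  rw [josephUpdate_eq_kalmanGain_add hP hS G, trace_add]
  exact le_add_of_nonneg_right (hS.posSemidef.mul_mul_conjTranspose_same _).trace_nonneg

theorem trace_josephUpdate_kalmanGain_eq_iff (hP : P.IsHermitian)
    (hS : (innovationCov P H R).PosDef) {G : Matrix n o 𝕜} :
    (josephUpdate P H R (kalmanGain P H R)).trace = (josephUpdate P H R G).trace ↔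
      G = kalmanGain P H R := by
  rw [josephUpdate_eq_kalmanGain_add hP hS G, trace_add, left_eq_add,
    trace_mul_mul_conjTranspose_eq_zero_iff hS, sub_eq_zero]

theorem kalman_gain_optimal_general (hP : P.PosSemidef) (hR : R.PosDef) :
    IsUnit (innovationCov P H R) ∧
    ∀ G : Matrix n o 𝕜,
      (josephUpdate P H R (kalmanGain P H R)).trace ≤ (josephUpdate P H R G).trace ∧
      ((josephUpdate P H R (kalmanGain P H R)).trace = (josephUpdate P H R G).trace →
        G = kalmanGain P H R) :=
  have hS : (innovationCov P H R).PosDef := posDef_innovationCov hP H hR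
  ⟨hS.isUnit, fun G => ⟨trace_josephUpdate_kalmanGain_le hP.isHermitian hS G,
    (trace_josephUpdate_kalmanGain_eq_iff hP.isHermitian hS).1⟩⟩

end Field

end JosephForm

theorem kalman_gain_optimal (n o : ℕ) (hn : 0 < n) (ho : 0 < o)
    (P : Matrix (Fin n) (Fin n) ℝ) (hP : P.PosSemidef)
    (H : Matrix (Fin o) (Fin n) ℝ)
    (R : Matrix (Fin o) (Fin o) ℝ) (hR : R.PosDef) :
    IsUnit (H * P * Hᵀ + R) ∧
    ∀ G : Matrix (Fin n) (Fin o) ℝ,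
      ((1 - (P * Hᵀ * (H * P * Hᵀ + R)⁻¹) * H) * P *
          (1 - (P * Hᵀ * (H * P * Hᵀ + R)⁻¹) * H)ᵀ +
        (P * Hᵀ * (H * P * Hᵀ + R)⁻¹) * R * (P * Hᵀ * (H * P * Hᵀ + R)⁻¹)ᵀ).trace ≤
      ((1 - G * H) * P * (1 - G * H)ᵀ + G * R * Gᵀ).trace ∧
      (((1 - (P * Hᵀ * (H * P * Hᵀ + R)⁻¹) * H) * P *
          (1 - (P * Hᵀ * (H * P * Hᵀ + R)⁻¹) * H)ᵀ +
        (P * Hᵀ * (H * P * Hᵀ + R)⁻¹) * R * (P * Hᵀ * (H * P * Hᵀ + R)⁻¹)ᵀ).trace =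
       ((1 - G * H) * P * (1 - G * H)ᵀ + G * R * Gᵀ).trace →
       G = P * Hᵀ * (H * P * Hᵀ + R)⁻¹) := by
  simpa only [innovationCov, josephUpdate, kalmanGain, conjTranspose_eq_transpose_of_trivial]
    using kalman_gain_optimal_general (H := H) hP hR
end

section
/- Let f : ℝⁿ → ℝⁿ be L-Lipschitz with L > 0, let x : [0, T] → ℝⁿ be twice differentiable with x'(t) = f(x(t)) for all t ∈ [0, T] and ‖x''(t)‖ ≤ M on [0, T]. Fix Δt > 0 and define the forward Euler iterates x₀ = x(0) and x_{j+1} = x_j + Δt · f(x_j), with t_j = j Δt. Then for every j with t_j ≤ T, the global error satisfies ‖x(t_j) − x_j‖ ≤ (M Δt / (2L)) · (exp(L t_j) − 1). -/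
/-!
Consistency and stability of the Euler step give convergence. When `x'` is `M`-Lipschitz, one step
of length `h` started on the trajectory misses it by at most `M h² / 2`; when the vector field is
`L`-Lipschitz, one step expands distances by at most `1 + L h`. Hence the error `e` satisfies
`e (j + 1) ≤ (1 + L h) e j + M h² / 2`, and summing the geometric series together with
`1 + L h ≤ exp (L h)` bounds it by `(M h² / 2) / (L h) * (exp (j L h) - 1)` when `e 0 = 0`.
-/

section DiscreteGronwall

variable {u : ℕ → ℝ} {b c : ℝ} {N : ℕ}

theorem le_pow_mul_add_of_le_one_add_mul_add (hc : 0 < c)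
    (hu : ∀ n < N, u (n + 1) ≤ (1 + c) * u n + b) :
    u N ≤ (1 + c) ^ N * u 0 + b / c * ((1 + c) ^ N - 1) := by
  induction N with
  | zero => simp
  | succ N ih =>
    calc u (N + 1) ≤ (1 + c) * u N + b := hu N N.lt_succ_self
      _ ≤ (1 + c) * ((1 + c) ^ N * u 0 + b / c * ((1 + c) ^ N - 1)) + b := by
        gcongr
        exact ih fun n hn ↦ hu n (hn.trans N.lt_succ_self)
      _ = (1 + c) ^ (N + 1) * u 0 + b / c * ((1 + c) ^ (N + 1) - 1) := by
        field_simp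
        ring

theorem one_add_pow_le_exp_nat_mul (hc : 0 ≤ c) (n : ℕ) : (1 + c) ^ n ≤ Real.exp (n * c) := by
  rw [Real.exp_nat_mul, add_comm]
  gcongr
  exact Real.add_one_le_exp c

theorem le_exp_mul_add_of_le_one_add_mul_add (hc : 0 < c) (hb : 0 ≤ b) (hu₀ : 0 ≤ u 0)
    (hu : ∀ n < N, u (n + 1) ≤ (1 + c) * u n + b) :
    u N ≤ Real.exp (N * c) * u 0 + b / c * (Real.exp (N * c) - 1) := by
  refine (le_pow_mul_add_of_le_one_add_mul_add hc hu).trans ?_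
  gcongr <;> exact one_add_pow_le_exp_nat_mul hc.le N

end DiscreteGronwall

section Euler

open Set

variable {E : Type*} [NormedAddCommGroup E] [NormedSpace ℝ E]

theorem norm_sub_add_smul_le_of_norm_deriv_sub_le {x x' : ℝ → E} {a b M : ℝ} (hab : a ≤ b)
    (hx : ∀ t ∈ Icc a b, HasDerivWithinAt x (x' t) (Icc a b) t)
    (hx' : ∀ t ∈ Icc a b, ‖x' t - x' a‖ ≤ M * (t - a)) :
    ‖x b - (x a + (b - a) • x' a)‖ ≤ M / 2 * (b - a) ^ 2 := by
  have remainder_deriv (t) (ht : t ∈ Icc a b) :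
      HasDerivWithinAt (fun s ↦ x s - (x a + (s - a) • x' a)) (x' t - x' a) (Icc a b) t := by
    simpa using (hx t ht).fun_sub
      ((((hasDerivWithinAt_id t _).sub_const a).smul_const (x' a)).const_add (x a))
  have bound_deriv (t : ℝ) : HasDerivAt (fun s ↦ M / 2 * (s - a) ^ 2) (M * (t - a)) t := by
    refine ((((hasDerivAt_id' t).sub_const a).fun_pow 2).const_mul (M / 2)).congr_deriv ?_
    push_cast
    ring
  exact image_norm_le_of_norm_deriv_right_le_deriv_boundary
    (fun t ht ↦ (remainder_deriv t ht).continuousWithinAt)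
    (fun t ht ↦ (remainder_deriv t (Ico_subset_Icc_self ht)).mono_of_mem_nhdsWithin
      (Icc_mem_nhdsGE_of_mem ht))
    (by simp) bound_deriv (fun t ht ↦ hx' t (Ico_subset_Icc_self ht)) (right_mem_Icc.2 hab)

/-- One step of length `h` of the forward Euler method for the vector field `f`. A time-dependent
field `v` is handled by taking `f = v t`, with `t` the time at the start of the step. -/
def eulerStep (f : E → E) (h : ℝ) (y : E) : E :=
  y + h • f y

theorem norm_eulerStep_sub_eulerStep_le {f : E → E} {L h : ℝ} (hh : 0 ≤ h)
    (hf : ∀ y z, ‖f y - f z‖ ≤ L * ‖y - z‖) (y z : E) :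
    ‖eulerStep f h y - eulerStep f h z‖ ≤ (1 + L * h) * ‖y - z‖ := by
  calc ‖eulerStep f h y - eulerStep f h z‖ = ‖(y - z) + h • (f y - f z)‖ := by
        rw [eulerStep, eulerStep, smul_sub, add_sub_add_comm]
    _ ≤ ‖y - z‖ + h * ‖f y - f z‖ := by
        simpa only [norm_smul, Real.norm_of_nonneg hh] using norm_add_le (y - z) (h • (f y - f z))
    _ ≤ ‖y - z‖ + h * (L * ‖y - z‖) := by gcongr; exact hf y z
    _ = (1 + L * h) * ‖y - z‖ := by ring

theorem norm_sub_eulerStep_le {v : ℝ → E → E} {x : ℝ → E} {a b L M : ℝ} (hab : a ≤ b)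
    (hv : ∀ y z, ‖v a y - v a z‖ ≤ L * ‖y - z‖)
    (hx : ∀ t ∈ Icc a b, HasDerivWithinAt x (v t (x t)) (Icc a b) t)
    (hx' : ∀ t ∈ Icc a b, ‖v t (x t) - v a (x a)‖ ≤ M * (t - a)) (y : E) :
    ‖x b - eulerStep (v a) (b - a) y‖ ≤
      (1 + L * (b - a)) * ‖x a - y‖ + M / 2 * (b - a) ^ 2 := by
  have consistency : ‖x b - eulerStep (v a) (b - a) (x a)‖ ≤ M / 2 * (b - a) ^ 2 :=
    norm_sub_add_smul_le_of_norm_deriv_sub_le hab hx hx'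
  have stability := norm_eulerStep_sub_eulerStep_le (sub_nonneg.2 hab) hv (x a) y
  linarith [norm_sub_le_norm_sub_add_norm_sub (x b) (eulerStep (v a) (b - a) (x a))
    (eulerStep (v a) (b - a) y)]

theorem euler_global_error_general {v : ℝ → E → E} {x : ℝ → E} {xe : ℕ → E} {L M T Δt : ℝ}
    (hL : 0 < L) (hM : 0 ≤ M) (hΔt : 0 < Δt)
    (hv : ∀ t ∈ Icc 0 T, ∀ y z, ‖v t y - v t z‖ ≤ L * ‖y - z‖)
    (hx : ∀ t ∈ Icc 0 T, HasDerivWithinAt x (v t (x t)) (Icc 0 T) t)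
    (hx' : ∀ s ∈ Icc 0 T, ∀ t ∈ Icc 0 T, ‖v t (x t) - v s (x s)‖ ≤ M * ‖t - s‖)
    (hstep : ∀ j : ℕ, xe (j + 1) = eulerStep (v (j * Δt)) Δt (xe j))
    {N : ℕ} (hN : N * Δt ≤ T) :
    ‖x (N * Δt) - xe N‖ ≤ Real.exp (L * (N * Δt)) * ‖x 0 - xe 0‖ +
      M * Δt / (2 * L) * (Real.exp (L * (N * Δt)) - 1) := by
  have error_succ_le (j) (hj : j < N) : ‖x ((j + 1 : ℕ) * Δt) - xe (j + 1)‖ ≤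
      (1 + L * Δt) * ‖x (j * Δt) - xe j‖ + M / 2 * Δt ^ 2 := by
    have length_eq : (j + 1 : ℕ) * Δt - j * Δt = Δt := by push_cast; ring
    have le_succ : j * Δt ≤ (j + 1 : ℕ) * Δt := by linarith
    have step_subset : Icc (j * Δt) ((j + 1 : ℕ) * Δt) ⊆ Icc 0 T :=
      Icc_subset_Icc (by positivity) (le_trans (by gcongr; exact hj) hN)
    have start_mem := step_subset (left_mem_Icc.2 le_succ)
    have local_error := norm_sub_eulerStep_le le_succ (hv _ start_mem)
      (fun t ht ↦ (hx t (step_subset ht)).mono step_subset)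
      (fun t ht ↦ by
        simpa only [Real.norm_of_nonneg (sub_nonneg.2 ht.1)] using
          hx' _ start_mem t (step_subset ht))
      (xe j)
    rwa [length_eq, ← hstep] at local_error
  have gronwall := le_exp_mul_add_of_le_one_add_mul_add (u := fun j : ℕ ↦ ‖x (j * Δt) - xe j‖)
    (by positivity) (by positivity) (norm_nonneg _) error_succ_le
  have coeff_eq : M / 2 * Δt ^ 2 / (L * Δt) = M * Δt / (2 * L) := by field_simp
  rwa [coeff_eq, mul_left_comm (N : ℝ), Nat.cast_zero, zero_mul] at gronwall

end Euler

theorem euler_global_error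
    (n : ℕ) (f : EuclideanSpace ℝ (Fin n) → EuclideanSpace ℝ (Fin n))
    (L : ℝ) (hL : 0 < L)
    (hf : ∀ a b, ‖f a - f b‖ ≤ L * ‖a - b‖)
    (x : ℝ → EuclideanSpace ℝ (Fin n)) (x'' : ℝ → EuclideanSpace ℝ (Fin n))
    (T M Δt : ℝ) (hΔt : 0 < Δt)
    (hx' : ∀ t ∈ Set.Icc (0 : ℝ) T, HasDerivAt x (f (x t)) t)
    (hx'' : ∀ t ∈ Set.Icc (0 : ℝ) T, HasDerivAt (fun s => f (x s)) (x'' t) t)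
    (hM : ∀ t ∈ Set.Icc (0 : ℝ) T, ‖x'' t‖ ≤ M)
    (xe : ℕ → EuclideanSpace ℝ (Fin n))
    (h0 : xe 0 = x 0)
    (hstep : ∀ j : ℕ, xe (j + 1) = xe j + Δt • f (xe j)) :
    ∀ j : ℕ, (j : ℝ) * Δt ≤ T →
      ‖x ((j : ℝ) * Δt) - xe j‖ ≤
        M * Δt / (2 * L) * (Real.exp (L * ((j : ℝ) * Δt)) - 1) := by
  intro j hj
  have M_nonneg : 0 ≤ M := (norm_nonneg _).trans (hM 0 ⟨le_rfl, le_trans (by positivity) hj⟩)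
  simpa [h0] using euler_global_error_general (v := fun _ ↦ f) hL M_nonneg hΔt (fun _ _ ↦ hf)
    (fun t ht ↦ (hx' t ht).hasDerivWithinAt)
    (fun s hs t ht ↦ (convex_Icc 0 T).norm_image_sub_le_of_norm_hasDerivWithin_le
      (fun r hr ↦ (hx'' r hr).hasDerivWithinAt) hM hs ht) hstep hj
end

section
/- Let f : ℝ → [0, ∞) be a measurable probability density with respect to Lebesgue measure (∫ f = 1) with finite mean μ = ∫ x f(x) dx and variance σ² = ∫ (x − μ)² f(x) dx for some σ > 0, and assume f · log f is integrable. Then the differential entropy satisfies −∫ f(x) log f(x) dx ≤ (1/2) log(2 π e σ²), and equality holds when f is the Gaussian density with mean μ and variance σ². -/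
open MeasureTheory Real

/-!
The logarithm of the Gaussian density `g` with mean `c` and variance `v` is an affine function of
`(x - c) ^ 2`, so the cross entropy `-∫ f log g` depends on the density `f` only through its second
moment about `c`. Gibbs' inequality `-∫ f log f ≤ -∫ f log g` bounds the entropy of `f` by this
quantity, and for `f = g` both sides coincide.
-/

section Entropy

variable {α : Type*} [MeasurableSpace α] {ν : Measure α} {f g : α → ℝ}

/-- The differential entropy `-∫ f log f ∂ν` of a density `f` with respect to `ν`; points where
`f` vanishes contribute `0` because `Real.log 0 = 0`. It is only meaningful when `f log f` is
integrable, the Bochner integral being `0` otherwise. -/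
noncomputable def differentialEntropy (ν : Measure α) (f : α → ℝ) : ℝ :=
  -∫ x, f x * log (f x) ∂ν

/-- The cross entropy `-∫ f log g ∂ν` of the density `g` relative to `f`, the upper bound for the
entropy of `f` in Gibbs' inequality. -/
noncomputable def crossEntropy (ν : Measure α) (f g : α → ℝ) : ℝ :=
  -∫ x, f x * log (g x) ∂ν

theorem differentialEntropy_congr_ae (hfg : f =ᵐ[ν] g) :
    differentialEntropy ν f = differentialEntropy ν g :=
  congrArg Neg.neg (integral_congr_ae (hfg.fun_comp fun y => y * log y))

theorem mul_log_sub_mul_log_le_sub {a b : ℝ} (ha : 0 ≤ a) (hb : 0 < b) :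
    a * log b - a * log a ≤ b - a := by
  rcases ha.eq_or_lt with rfl | ha_pos
  · simpa using hb.le
  calc a * log b - a * log a = a * log (b / a) := by rw [log_div hb.ne' ha_pos.ne', mul_sub]
    _ ≤ a * (b / a - 1) :=
        mul_le_mul_of_nonneg_left (log_le_sub_one_of_pos (div_pos hb ha_pos)) ha
    _ = b - a := by rw [mul_sub, mul_div_cancel₀ b ha_pos.ne', mul_one]

theorem differentialEntropy_le_crossEntropy
    (hf_nonneg : 0 ≤ᵐ[ν] f) (hg_pos : ∀ᵐ x ∂ν, 0 < g x)
    (hf_int : Integrable f ν) (hg_int : Integrable g ν) (hgf : ∫ x, g x ∂ν ≤ ∫ x, f x ∂ν)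
    (hf_log : Integrable (fun x => f x * log (f x)) ν)
    (hg_log : Integrable (fun x => f x * log (g x)) ν) :
    differentialEntropy ν f ≤ crossEntropy ν f g := by
  have h_integral : ∫ x, (f x * log (g x) - f x * log (f x)) ∂ν ≤ ∫ x, (g x - f x) ∂ν := by
    refine integral_mono_ae (hg_log.sub hf_log) (hg_int.sub hf_int) ?_
    filter_upwards [hf_nonneg, hg_pos] with x hfx hgx
    exact mul_log_sub_mul_log_le_sub hfx hgx
  rw [integral_sub hg_log hf_log, integral_sub hg_int hf_int] at h_integral
  unfold differentialEntropy crossEntropy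
  linarith

end Entropy

section Gaussian

open ProbabilityTheory
open scoped NNReal

variable {f : ℝ → ℝ} {c : ℝ} {v : ℝ≥0}

theorem log_gaussianPDFReal (c : ℝ) (hv : v ≠ 0) (x : ℝ) :
    log (gaussianPDFReal c v x) = -(1 / 2 * log (2 * π * v)) - (x - c) ^ 2 / (2 * v) := by
  rw [gaussianPDFReal, log_mul (by positivity) (exp_pos _).ne', log_exp, log_inv,
    log_sqrt (by positivity)]
  ring

theorem mul_log_gaussianPDFReal (f : ℝ → ℝ) (c : ℝ) (hv : v ≠ 0) :
    (fun x => f x * log (gaussianPDFReal c v x)) = fun x =>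
      -(1 / 2 * log (2 * π * v)) * f x - (x - c) ^ 2 * f x / (2 * v) := by
  funext x
  rw [log_gaussianPDFReal c hv]
  ring

theorem integrable_mul_log_gaussianPDFReal (hv : v ≠ 0) (hf_int : Integrable f)
    (hf_sq : Integrable fun x => (x - c) ^ 2 * f x) :
    Integrable fun x => f x * log (gaussianPDFReal c v x) := by
  rw [mul_log_gaussianPDFReal f c hv]
  exact (hf_int.const_mul _).sub (hf_sq.div_const _)

theorem crossEntropy_gaussianPDFReal (hv : v ≠ 0) (hf_int : Integrable f)
    (hf_sq : Integrable fun x => (x - c) ^ 2 * f x) :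
    crossEntropy volume f (gaussianPDFReal c v) =
      1 / 2 * log (2 * π * v) * (∫ x, f x) + (∫ x, (x - c) ^ 2 * f x) / (2 * v) := by
  rw [crossEntropy, mul_log_gaussianPDFReal f c hv,
    integral_sub (hf_int.const_mul _) (hf_sq.div_const _), integral_const_mul, integral_div]
  ring

theorem half_log_two_pi_mul_add_div (hv : v ≠ 0) :
    1 / 2 * log (2 * π * v) + v / (2 * v) = 1 / 2 * log (2 * π * exp 1 * v) := by
  rw [mul_right_comm _ (exp 1), log_mul (by positivity) (exp_pos 1).ne', log_exp]
  field_simp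

theorem integral_sq_sub_mul_gaussianPDFReal (c : ℝ) (hv : v ≠ 0) :
    ∫ x, (x - c) ^ 2 * gaussianPDFReal c v x = v := by
  have h_variance := variance_fun_id_gaussianReal (μ := c) (v := v)
  rw [variance_eq_integral aemeasurable_id', integral_id_gaussianReal,
    integral_gaussianReal_eq_integral_smul hv] at h_variance
  simpa only [smul_eq_mul, mul_comm] using h_variance

theorem differentialEntropy_gaussianPDFReal (c : ℝ) (hv : v ≠ 0) :
    differentialEntropy volume (gaussianPDFReal c v) = 1 / 2 * log (2 * π * exp 1 * v) := by
  have h_sq := integral_sq_sub_mul_gaussianPDFReal c hv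
  have h_sq_int : Integrable fun x => (x - c) ^ 2 * gaussianPDFReal c v x :=
    .of_integral_ne_zero (h_sq ▸ NNReal.coe_ne_zero.mpr hv)
  calc differentialEntropy volume (gaussianPDFReal c v)
      = crossEntropy volume (gaussianPDFReal c v) (gaussianPDFReal c v) := rfl
    _ = 1 / 2 * log (2 * π * v) + v / (2 * v) := by
        rw [crossEntropy_gaussianPDFReal hv (integrable_gaussianPDFReal c v) h_sq_int,
          integral_gaussianPDFReal_eq_one c hv, h_sq, mul_one]
    _ = 1 / 2 * log (2 * π * exp 1 * v) := half_log_two_pi_mul_add_div hv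

theorem differentialEntropy_le_of_integral_sq_sub_le (hv : v ≠ 0)
    (hf_nonneg : 0 ≤ᵐ[volume] f) (hf_prob : ∫ x, f x = 1)
    (hf_sq : Integrable fun x => (x - c) ^ 2 * f x) (hf_le : ∫ x, (x - c) ^ 2 * f x ≤ v)
    (hf_log : Integrable fun x => f x * log (f x)) :
    differentialEntropy volume f ≤ 1 / 2 * log (2 * π * exp 1 * v) := by
  have hf_int : Integrable f := .of_integral_ne_zero (hf_prob ▸ one_ne_zero)
  have h_mass : ∫ x, gaussianPDFReal c v x = ∫ x, f x := by
    rw [integral_gaussianPDFReal_eq_one c hv, hf_prob]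
  calc differentialEntropy volume f
      ≤ crossEntropy volume f (gaussianPDFReal c v) :=
        differentialEntropy_le_crossEntropy hf_nonneg
          (.of_forall fun x => gaussianPDFReal_pos c v x hv) hf_int
          (integrable_gaussianPDFReal c v) h_mass.le hf_log
          (integrable_mul_log_gaussianPDFReal hv hf_int hf_sq)
    _ = 1 / 2 * log (2 * π * v) + (∫ x, (x - c) ^ 2 * f x) / (2 * v) := by
        rw [crossEntropy_gaussianPDFReal hv hf_int hf_sq, hf_prob, mul_one]
    _ ≤ 1 / 2 * log (2 * π * v) + v / (2 * v) := by gcongr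
    _ = 1 / 2 * log (2 * π * exp 1 * v) := half_log_two_pi_mul_add_div hv

theorem gaussian_max_entropy_general (hv : v ≠ 0)
    (hf_nonneg : 0 ≤ᵐ[volume] f) (hf_prob : ∫ x, f x = 1)
    (hf_sq : Integrable fun x => (x - c) ^ 2 * f x) (hf_le : ∫ x, (x - c) ^ 2 * f x ≤ v)
    (hf_log : Integrable fun x => f x * log (f x)) :
    differentialEntropy volume f ≤ 1 / 2 * log (2 * π * exp 1 * v) ∧
      (f =ᵐ[volume] gaussianPDFReal c v →
        differentialEntropy volume f = 1 / 2 * log (2 * π * exp 1 * v)) :=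
  ⟨differentialEntropy_le_of_integral_sq_sub_le hv hf_nonneg hf_prob hf_sq hf_le hf_log,
    fun hf_gaussian =>
      (differentialEntropy_congr_ae hf_gaussian).trans (differentialEntropy_gaussianPDFReal c hv)⟩

end Gaussian

theorem gaussian_max_entropy
    (f : ℝ → ℝ) (hf_meas : Measurable f) (hf_nonneg : ∀ x, 0 ≤ f x)
    (μ σ : ℝ) (hσ : 0 < σ)
    (hf_int : Integrable f)
    (hf_prob : ∫ x, f x = 1)
    (hmean : ∫ x, x * f x = μ)
    (hvar : ∫ x, (x - μ) ^ 2 * f x = σ ^ 2)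
    (hent : Integrable (fun x => f x * Real.log (f x))) :
    -∫ x, f x * Real.log (f x) ≤ (1 / 2) * Real.log (2 * π * Real.exp 1 * σ ^ 2) ∧
    ((∀ x, f x = (Real.sqrt (2 * π * σ ^ 2))⁻¹ * Real.exp (-(x - μ) ^ 2 / (2 * σ ^ 2))) →
      -∫ x, f x * Real.log (f x) = (1 / 2) * Real.log (2 * π * Real.exp 1 * σ ^ 2)) := by
  have hσ_sq : 0 < σ ^ 2 := pow_pos hσ 2
  lift σ ^ 2 to NNReal using hσ_sq.le with v
  exact (gaussian_max_entropy_general (NNReal.coe_pos.mp hσ_sq).ne' (.of_forall hf_nonneg) hf_prob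
    (.of_integral_ne_zero (hvar ▸ hσ_sq.ne')) hvar.le hent).imp_right
    fun h_entropy hf_gaussian => h_entropy (.of_forall hf_gaussian)
end
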